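/- arXiv:1802.05303 — 2 statements merged into one kernel-verified Lean document; each statement's English description precedes it below -/
import Mathlib

section
/- Assume there exists a set N ⊆ [0,1] of positive Lebesgue outer measure such that for every function g : N → ℕ^ℕ there exists h : ℕ → ℕ with g(x) ≤* h for all x ∈ N (i.e. non(N) < 𝔟). Then for every sequence of functions f_n : [0,1] → [0,1] such that f_n(x) → 0 for every x ∈ [0,1], and every ε > 0, there exists A ⊆ [0,1] with m*(A) ≥ 1 − ε such that f_n converges to 0 uniformly on A. -/
open MeasureTheory Filter Set

/-!
A rate of convergence of `f n x → F x` assigns to each point `x` a sequence of naturals. On a set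
`E` of cardinality less than `𝔟` all these sequences are eventually dominated by a single `h`, and
the subsets of `E` on which the domination starts at index `j` increase to `E`; convergence is
uniform on each of them. Outer measure is continuous along increasing sequences of arbitrary sets,
so it remains to find such an `E` of full outer measure in `[0, 1]`. Take the union of the
rational translates of a non-null set `N` with `|N| < 𝔟`: it still has cardinality less than `𝔟`,
and its measurable hull is a.e. invariant under rational translations, hence conull by ergodicity.
-/

open scoped Pointwise Topology Uniformity ENNReal symmDiff

section BoundingNumber

variable {α β : Type*}

theorem exists_forall_eventuallyLE_atTop {ι γ : Type*} [Countable ι] [SemilatticeSup γ]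
    [Nonempty γ] (g : ι → ℕ → γ) : ∃ h : ℕ → γ, ∀ i, g i ≤ᶠ[atTop] h := by
  cases isEmpty_or_nonempty ι with
  | inl _ => exact ⟨fun _ ↦ Classical.arbitrary γ, isEmptyElim⟩
  | inr _ =>
    obtain ⟨e, he⟩ := exists_surjective_nat ι
    refine ⟨fun n ↦ partialSups (fun k ↦ g (e k) n) n, he.forall.2 fun k ↦ ?_⟩
    filter_upwards [eventually_ge_atTop k] with n hkn
    exact le_partialSups_of_le (fun k ↦ g (e k) n) hkn

/-- The condition `|s| < 𝔟` on the cardinality of `s`, where `𝔟` is the bounding number, stated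
without cardinals: every map from `s` to `ℕ → ℕ` has image bounded for eventual domination `≤*`.
The maps `g` are total on `α`, but only their values on `s` matter. -/
def CardLTBounding (s : Set α) : Prop :=
  ∀ g : α → ℕ → ℕ, ∃ h : ℕ → ℕ, ∀ x ∈ s, g x ≤ᶠ[atTop] h

namespace CardLTBounding

variable {s t : Set α}

theorem mono (ht : CardLTBounding t) (hst : s ⊆ t) : CardLTBounding s := fun g ↦
  (ht g).imp fun _ hh x hx ↦ hh x (hst hx)

theorem image (hs : CardLTBounding s) (φ : α → β) : CardLTBounding (φ '' s) := fun g ↦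
  (hs (g ∘ φ)).imp fun _ hh ↦ forall_mem_image.2 hh

theorem iUnion {ι : Type*} [Countable ι] {s : ι → Set α} (hs : ∀ i, CardLTBounding (s i)) :
    CardLTBounding (⋃ i, s i) := by
  intro g
  choose h hh using fun i ↦ hs i g
  obtain ⟨H, hH⟩ := exists_forall_eventuallyLE_atTop h
  refine ⟨H, fun x hx ↦ ?_⟩
  obtain ⟨i, hi⟩ := mem_iUnion.1 hx
  exact (hh i x hi).trans (hH i)

theorem exists_monotone_iUnion_eq_tendstoUniformlyOn [UniformSpace β]
    [IsCountablyGenerated (𝓤 β)] (hs : CardLTBounding s) {f : ℕ → α → β} {F : α → β}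
    (hf : ∀ x ∈ s, Tendsto (f · x) atTop (𝓝 (F x))) :
    ∃ A : ℕ → Set α, Monotone A ∧ ⋃ j, A j = s ∧ ∀ j, TendstoUniformlyOn f F atTop (A j) := by
  obtain ⟨V, hV⟩ := (𝓤 β).exists_antitone_basis
  have exists_rate (x : α) (k : ℕ) : ∃ m, x ∈ s → ∀ n ≥ m, (F x, f n x) ∈ V k := by
    by_cases hx : x ∈ s
    · obtain ⟨m, hm⟩ := eventually_atTop.1 (Uniform.tendsto_nhds_right.1 (hf x hx) (hV.mem k))
      exact ⟨m, fun _ ↦ hm⟩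
    · exact ⟨0, fun h ↦ absurd h hx⟩
  choose rate hrate using exists_rate
  obtain ⟨h, hh⟩ := hs rate
  refine ⟨fun j ↦ {x ∈ s | ∀ k ≥ j, rate x k ≤ h k}, ?_, ?_, fun j U hU ↦ ?_⟩
  · exact fun i j hij x hx ↦ ⟨hx.1, fun k hk ↦ hx.2 k (hij.trans hk)⟩
  · refine Subset.antisymm (iUnion_subset fun _ ↦ sep_subset _ _) fun x hx ↦ ?_
    obtain ⟨j, hj⟩ := eventually_atTop.1 (hh x hx)
    exact mem_iUnion.2 ⟨j, hx, hj⟩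
  · obtain ⟨k, hkj, hkU⟩ := ((eventually_ge_atTop j).and (hV.eventually_subset hU)).exists
    filter_upwards [eventually_ge_atTop (h k)] with n hn x hx
    exact hkU (hrate x k hx.1 n ((hx.2 k hkj).trans hn))

end CardLTBounding

end BoundingNumber

section ClosedFamily

variable {X Y Z : Type*}
  [TopologicalSpace X] [MeasurableSpace X] [BorelSpace X] [R1Space X]
  [TopologicalSpace Y] [MeasurableSpace Y] [BorelSpace Y] [R1Space Y] [TopologicalSpace Z]
  {μ : Measure X} {ν : Measure Y} [μ.InnerRegularCompactLTTop] [IsLocallyFiniteMeasure ν]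
  {f : Z → C(X, Y)} {t : Set Y}

theorem isClosed_setOfPred_preimage_ae_le_of_ne_top (hf : Continuous f)
    (hfm : ∀ z, MeasurePreserving (f z) μ ν) (s : Set X) (ht : NullMeasurableSet t ν)
    (ht_top : ν t ≠ ∞) : IsClosed {z | f z ⁻¹' t ≤ᵐ[μ] s} := by
  refine isClosed_iff_frequently.2 fun z hz ↦ ae_le_set.2 ?_
  have hlim : Tendsto (fun w ↦ μ ((f w ⁻¹' t) ∆ (f z ⁻¹' t))) (𝓝 z) (𝓝 0) :=
    tendsto_measure_symmDiff_preimage_nhds_zero (hf.tendsto z) (.of_forall hfm) (hfm z) ht ht_top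
  refine le_antisymm (ge_of_tendsto_of_frequently hlim (hz.mono fun w hw ↦ ?_)) zero_le
  calc
    μ (f z ⁻¹' t \ s) ≤ μ (f z ⁻¹' t \ f w ⁻¹' t) + μ (f w ⁻¹' t \ s) :=
      (measure_mono (sdiff_triangle _ _ _)).trans (measure_union_le _ _)
    _ = μ (f z ⁻¹' t \ f w ⁻¹' t) := by rw [ae_le_set.1 hw, add_zero]
    _ ≤ μ ((f w ⁻¹' t) ∆ (f z ⁻¹' t)) := measure_mono subset_union_right

theorem isClosed_setOfPred_preimage_ae_le [SigmaFinite ν] (hf : Continuous f)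
    (hfm : ∀ z, MeasurePreserving (f z) μ ν) (s : Set X) (ht : NullMeasurableSet t ν) :
    IsClosed {z | f z ⁻¹' t ≤ᵐ[μ] s} := by
  have hcover (z : Z) : f z ⁻¹' t = ⋃ n, f z ⁻¹' (t ∩ spanningSets ν n) := by
    rw [← preimage_iUnion, ← inter_iUnion, iUnion_spanningSets, inter_univ]
  have heq : {z | f z ⁻¹' t ≤ᵐ[μ] s} =
      ⋂ n, {z | f z ⁻¹' (t ∩ spanningSets ν n) ≤ᵐ[μ] s} := by
    ext z
    simp only [mem_ofPred_eq, mem_iInter, hcover, ae_le_set, iUnion_sdiff, measure_iUnion_null_iff]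
  rw [heq]
  exact isClosed_iInter fun n ↦ isClosed_setOfPred_preimage_ae_le_of_ne_top hf hfm s
    (ht.inter (measurableSet_spanningSets ν n).nullMeasurableSet)
    (measure_ne_top_of_subset inter_subset_right (measure_spanningSets_lt_top ν n).ne)

end ClosedFamily

section Ergodic

theorem toMeasurable_ae_le_of_subset {X : Type*} [MeasurableSpace X] {μ : Measure X} [SFinite μ]
    {s t : Set X} (ht : MeasurableSet t) (hst : s ⊆ t) : toMeasurable μ s ≤ᵐ[μ] t := by
  rw [ae_le_set, sdiff_eq, Measure.measure_toMeasurable_inter_of_sFinite ht.compl, ← sdiff_eq,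
    sdiff_eq_empty.2 hst, measure_empty]

section Dense

variable {X : Type*} [TopologicalSpace X] [R1Space X] [MeasurableSpace X] [BorelSpace X]
  {μ : Measure X} [SigmaFinite μ] [μ.InnerRegularCompactLTTop] [IsLocallyFiniteMeasure μ]

@[to_additive]
theorem aeconst_of_dense_preimage_smul_ae_of_sigmaFinite {M : Type*} [TopologicalSpace M]
    [SMul M X] [ContinuousSMul M X] [ErgodicSMul M X μ] {s : Set X} (hs : NullMeasurableSet s μ)
    (hd : Dense {g : M | (g • ·) ⁻¹' s =ᵐ[μ] s}) : EventuallyConst s (ae μ) := by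
  let action : C(M × X, X) := ⟨fun p ↦ p.1 • p.2, continuous_smul⟩
  have preimage_ae_le {t : Set X} (ht : NullMeasurableSet t μ)
      (hst : ∀ g : M, (g • ·) ⁻¹' s =ᵐ[μ] s → (g • ·) ⁻¹' t ≤ᵐ[μ] t) (g : M) :
      (g • ·) ⁻¹' t ≤ᵐ[μ] t :=
    (isClosed_setOfPred_preimage_ae_le action.curry.continuous
      (measurePreserving_smul · μ) t ht).closure_subset_iff.2 hst (hd g)
  refine aeconst_of_forall_preimage_smul_ae_eq M hs fun g ↦ ?_
  refine (preimage_ae_le hs (fun _ h ↦ h.le) g).antisymm ?_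
  simpa only [preimage_compl, compl_compl] using
    (preimage_ae_le hs.compl (fun _ h ↦ h.compl.le) g).compl

@[to_additive]
theorem ergodicSMul_subgroup_of_dense {G : Type*} [Group G] [TopologicalSpace G] [MulAction G X]
    [ContinuousSMul G X] [ErgodicSMul G X μ] {D : Subgroup G} (hD : Dense (D : Set G)) :
    ErgodicSMul D X μ where
  measure_preimage_smul d _ hs := SMulInvariantMeasure.measure_preimage_smul (d : G) hs
  aeconst_of_forall_preimage_smul_ae_eq hs hinv :=
    aeconst_of_dense_preimage_smul_ae_of_sigmaFinite hs.nullMeasurableSet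
      (hD.mono fun d hd ↦ hinv ⟨d, hd⟩)

end Dense

variable {G X : Type*} [Group G] [MulAction G X] [MeasurableSpace X] [MeasurableConstSMul G X]
  {μ : Measure X} [ErgodicSMul G X μ] [SFinite μ] {s t : Set X}

@[to_additive]
theorem measure_inter_eq_of_forall_smul_eq (hs : ∀ g : G, g • s = s) (hs₀ : μ s ≠ 0)
    (ht : MeasurableSet t) : μ (s ∩ t) = μ t := by
  set T := toMeasurable μ s
  have hT : MeasurableSet T := measurableSet_toMeasurable μ s
  have ae_le_preimage (g : G) : T ≤ᵐ[μ] (g • ·) ⁻¹' T := by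
    refine toMeasurable_ae_le_of_subset (measurable_const_smul g hT) ?_
    exact fun x hx ↦ subset_toMeasurable μ s (hs g ▸ smul_mem_smul_set hx)
  have preimage_ae_le (g : G) : (g • ·) ⁻¹' T ≤ᵐ[μ] T := by
    filter_upwards [tendsto_smul_ae μ g |>.eventually (ae_le_preimage g⁻¹)] with x hx hgx
    exact inv_smul_smul g x ▸ hx hgx
  have hT_const : EventuallyConst T (ae μ) :=
    aeconst_of_forall_preimage_smul_ae_eq G hT.nullMeasurableSet fun g ↦
      (preimage_ae_le g).antisymm (ae_le_preimage g)
  have hT_univ : T =ᵐ[μ] univ := by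
    refine (eventuallyConst_set'.1 hT_const).resolve_left fun hT_empty ↦ hs₀ ?_
    rw [← measure_toMeasurable, measure_congr hT_empty, measure_empty]
  calc
    μ (s ∩ t) = μ (T ∩ t) := (Measure.measure_toMeasurable_inter_of_sFinite ht s).symm
    _ = μ (univ ∩ t) := measure_congr (hT_univ.inter (ae_eq_refl t))
    _ = μ t := by rw [univ_inter]

@[to_additive]
theorem measure_iUnion_smul_inter_eq (hs : μ s ≠ 0) (ht : MeasurableSet t) :
    μ ((⋃ g : G, g • s) ∩ t) = μ t := by
  refine measure_inter_eq_of_forall_smul_eq (G := G) (fun g ↦ ?_) (fun h ↦ hs ?_) ht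
  · simp only [smul_set_iUnion, smul_smul]
    exact (Equiv.mulLeft g).surjective.iUnion_comp fun h ↦ h • s
  · exact measure_mono_null (subset_iUnion_of_subset 1 (one_smul G s).superset) h

end Ergodic

theorem stmt_5_general {G X β : Type*} [AddGroup G] [Countable G] [AddAction G X]
    [MeasurableSpace X] [MeasurableConstVAdd G X] {μ : Measure X} [SFinite μ] [ErgodicVAdd G X μ]
    [UniformSpace β] [IsCountablyGenerated (𝓤 β)]
    {s t : Set X} (hs₀ : μ s ≠ 0) (hs : CardLTBounding s) (ht : MeasurableSet t)
    {f : ℕ → X → β} {F : X → β} (hf : ∀ x ∈ t, Tendsto (f · x) atTop (𝓝 (F x)))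
    {c : ℝ≥0∞} (hc : c < μ t) :
    ∃ A ⊆ t, c < μ A ∧ TendstoUniformlyOn f F atTop A := by
  have hE : CardLTBounding ((⋃ g : G, g +ᵥ s) ∩ t) :=
    (CardLTBounding.iUnion fun g : G ↦ hs.image (g +ᵥ ·)).mono inter_subset_left
  obtain ⟨A, hA_mono, hA_iUnion, hA⟩ :=
    hE.exists_monotone_iUnion_eq_tendstoUniformlyOn fun x hx ↦ hf x hx.2
  have hlim : Tendsto (μ ∘ A) atTop (𝓝 (μ t)) := by
    rw [← measure_iUnion_vadd_inter_eq (G := G) hs₀ ht, ← hA_iUnion]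
    exact tendsto_measure_iUnion_atTop hA_mono
  obtain ⟨j, hj⟩ := (hlim.eventually_const_lt hc).exists
  exact ⟨A j, (subset_iUnion A j).trans (hA_iUnion.trans_subset inter_subset_right), hj, hA j⟩

theorem stmt_5
    (hyp : ∃ N : Set ℝ, N ⊆ Set.Icc 0 1 ∧ 0 < volume N ∧
      ∀ g : ℝ → ℕ → ℕ, ∃ h : ℕ → ℕ, ∀ x ∈ N, ∀ᶠ n in atTop, g x n ≤ h n)
    (f : ℕ → ℝ → ℝ)
    (hmaps : ∀ n : ℕ, ∀ x ∈ Set.Icc (0 : ℝ) 1, f n x ∈ Set.Icc (0 : ℝ) 1)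
    (hconv : ∀ x ∈ Set.Icc (0 : ℝ) 1, Tendsto (fun n => f n x) atTop (nhds 0))
    (ε : ℝ) (hε : 0 < ε) :
    ∃ A ⊆ Set.Icc (0 : ℝ) 1, ENNReal.ofReal (1 - ε) ≤ volume A ∧
      ∀ δ : ℝ, 0 < δ → ∃ N : ℕ, ∀ n ≥ N, ∀ x ∈ A, f n x < δ := by
  obtain ⟨N, -, hN₀, hN⟩ := hyp
  let D : AddSubgroup ℝ := (Rat.castHom ℝ).toAddMonoidHom.range
  have : Countable D := (countable_range ((↑) : ℚ → ℝ)).to_subtype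
  have : ErgodicVAdd D ℝ volume := ergodicVAdd_addSubgroup_of_dense Rat.denseRange_cast
  have hε_lt : ENNReal.ofReal (1 - ε) < volume (Icc (0 : ℝ) 1) := by simpa using hε
  obtain ⟨A, hA_sub, hA_vol, hA⟩ :=
    stmt_5_general (G := D) hN₀.ne' hN measurableSet_Icc hconv hε_lt
  refine ⟨A, hA_sub, hA_vol.le, fun δ hδ ↦ ?_⟩
  obtain ⟨m, hm⟩ := eventually_atTop.1 (Metric.tendstoUniformlyOn_iff.1 hA δ hδ)
  refine ⟨m, fun n hn x hx ↦ (le_abs_self _).trans_lt ?_⟩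
  simpa using hm n hn x hx
end

section
/- Assume that every subset of ℝ of cardinality less than the continuum is Lebesgue-null (i.e. non(N) = 𝔠), and that there exists a set Z ⊆ ℕ^ℕ of cardinality continuum such that every meagre subset of Z has cardinality less than the continuum (a 𝔠-Lusin set). Let φ be a lower semicontinuous submeasure on ℕ with lim_{n→∞} φ(ℕ \ [0,n)) > 0 (so that I = Exh(φ) is a proper ideal). Then there exist a sequence f_m : [0,1] → [0,1] converging to 0 I-pointwise on [0,1], and ε > 0, such that for every A ⊆ [0,1] with m*(A) ≥ 1 − ε, the sequence does not converge to 0 equi-ideally on A. -/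
open MeasureTheory Filter Set ENNReal

/-- A lower semicontinuous submeasure on `ℕ`. -/
def IsLSCSubmeasure (φ : Set ℕ → ℝ≥0∞) : Prop :=
  φ ∅ = 0 ∧ (∀ A B : Set ℕ, φ A ≤ φ (A ∪ B)) ∧
    (∀ A B : Set ℕ, φ (A ∪ B) ≤ φ A + φ B) ∧
    ∀ A : Set ℕ, Tendsto (fun n => φ (A ∩ Set.Iio n)) atTop (nhds (φ A))

/-- `f` converges to `0` `Exh(φ)`-pointwise on `A`. -/
def ExhPointwise (φ : Set ℕ → ℝ≥0∞) (f : ℕ → ℝ → ℝ) (A : Set ℝ) : Prop :=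
  ∀ δ : ℝ, 0 < δ → ∀ x ∈ A,
    ∃ k : ℕ, φ ({m | δ ≤ f m x} \ Set.Iio k) < ENNReal.ofReal δ

/-- `f` converges to `0` equi-ideally (w.r.t. `φ`) on `A`. -/
def ExhEqui (φ : Set ℕ → ℝ≥0∞) (f : ℕ → ℝ → ℝ) (A : Set ℝ) : Prop :=
  ∀ δ : ℝ, 0 < δ →
    ∃ k : ℕ, ∀ x ∈ A, φ ({m | δ ≤ f m x} \ Set.Iio k) < ENNReal.ofReal δ

/-- A set of functions `ℕ → ℕ` is bounded if a single `h : ℕ → ℕ` dominates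
all of its members everywhere. -/
def BddNatFun (S : Set (ℕ → ℕ)) : Prop :=
  ∃ h : ℕ → ℕ, ∀ f ∈ S, ∀ n, f n ≤ h n

/-!
Index a Lusin set by the reals, `x ↦ g x ∈ ℕ^ℕ`, so that bounded families in `ℕ^ℕ`, being meagre,
are the images of null sets only. Fix `0 < c < lim φ(ℕ \ [0, n))`; by lower semicontinuity every
`k` has an `L k` with `φ([k, L k)) > c`. Let `f_m(x)` be the supremum of `1 / (n + 1)` over those
`n` with `m < L (g x n)`; it tends to `0` as `m → ∞`. If `k n` witnesses equi-ideal convergence on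
`A` for `δ = min c (1 / (n + 1))`, then `g x n ≤ k n` for all `x ∈ A`: otherwise
`[g x n, L (g x n))` lies in `{m | δ ≤ f_m(x)} \ [0, k n)` and has submeasure above `c`. So `g` is
bounded on `A`, and `A` is null.
-/

open scoped Cardinal Topology

section BoundedFamilies

theorem isNowhereDense_Iic_pi {ι : Type*} [Infinite ι] {α : ι → Type*} [∀ i, Preorder (α i)]
    [∀ i, NoMaxOrder (α i)] [∀ i, TopologicalSpace (α i)] [∀ i, OrderClosedTopology (α i)]
    (h : ∀ i, α i) : IsNowhereDense (Iic h) := by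
  classical
  rw [isClosed_Iic.isNowhereDense_iff, eq_empty_iff_forall_notMem]
  intro g hg
  choose b hb using fun i => exists_gt (h i)
  have hlim : Tendsto (fun i => Function.update g i (b i)) cofinite (𝓝 g) := by
    rw [tendsto_pi_nhds]
    refine fun j => tendsto_const_nhds.congr' ?_
    filter_upwards [eventually_cofinite_ne j] with i hij
    rw [Function.update_of_ne hij.symm]
  obtain ⟨i, hi⟩ := (hlim.eventually (mem_interior_iff_mem_nhds.1 hg)).exists
  exact (hb i).not_ge (by simpa using hi i)

theorem BddNatFun.isMeagre {S : Set (ℕ → ℕ)} (hS : BddNatFun S) : IsMeagre S :=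
  let ⟨h, hh⟩ := hS
  (isNowhereDense_Iic_pi h).isMeagre.mono hh

theorem exists_forall_bddNatFun_image_imp_measure_eq_zero {α : Type} [MeasurableSpace α]
    {μ : Measure α} {κ : Cardinal} (hμ : ∀ s : Set α, #s < κ → μ s = 0)
    {Z : Set (ℕ → ℕ)} (hZ : #α ≤ #Z) (hZκ : ∀ M ⊆ Z, BddNatFun M → #M < κ) :
    ∃ g : α → ℕ → ℕ, ∀ A : Set α, BddNatFun (g '' A) → μ A = 0 := by
  obtain ⟨e⟩ := hZ
  have hinj : Function.Injective fun x => (e x : ℕ → ℕ) :=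
    Subtype.val_injective.comp e.injective
  refine ⟨fun x => e x, fun A hA => hμ A ?_⟩
  rw [← Cardinal.mk_image_eq hinj]
  exact hZκ _ (image_subset_iff.2 fun x _ => (e x).2) hA

end BoundedFamilies

section HarmonicSup

/-- The supremum of the functions `1 / (n + 1) · 1_{[0, u n)}`: a null sequence which is at least
`1 / (n + 1)` on `[0, u n)` for every `n`. -/
noncomputable def harmonicSup (u : ℕ → ℕ) (m : ℕ) : ℝ :=
  ⨆ n : ℕ, (Iio (u n)).indicator (fun _ => 1 / ((n : ℝ) + 1)) m

variable (u : ℕ → ℕ)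

theorem indicator_one_div_mem_Icc (m n : ℕ) :
    (Iio (u n)).indicator (fun _ => 1 / ((n : ℝ) + 1)) m ∈ Icc (0 : ℝ) 1 := by
  refine ⟨indicator_nonneg (fun _ _ => by positivity) m, ?_⟩
  refine indicator_le' (fun _ _ => ?_) (fun _ _ => zero_le_one) m
  exact div_le_one_of_le₀ (by simp) (by positivity)

theorem harmonicSup_mem_Icc (m : ℕ) : harmonicSup u m ∈ Icc (0 : ℝ) 1 :=
  ⟨Real.iSup_nonneg fun n => (indicator_one_div_mem_Icc u m n).1,
    ciSup_le fun n => (indicator_one_div_mem_Icc u m n).2⟩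

variable {u}

theorem one_div_le_harmonicSup {m n : ℕ} (h : m < u n) : 1 / ((n : ℝ) + 1) ≤ harmonicSup u m := by
  have hbdd : BddAbove (range fun n : ℕ => (Iio (u n)).indicator (fun _ => 1 / ((n : ℝ) + 1)) m) :=
    ⟨1, forall_mem_range.2 fun n => (indicator_one_div_mem_Icc u m n).2⟩
  exact le_ciSup_of_le hbdd n (indicator_of_mem (mem_Iio.2 h) fun _ => 1 / ((n : ℝ) + 1)).ge

theorem harmonicSup_le_one_div {m N : ℕ} (h : ∀ n < N, u n ≤ m) :
    harmonicSup u m ≤ 1 / ((N : ℝ) + 1) := by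
  refine ciSup_le fun n => ?_
  rcases lt_or_ge n N with hn | hn
  · rw [indicator_of_notMem (by simpa using h n hn)]
    positivity
  · exact indicator_le' (fun _ _ => Nat.one_div_le_one_div hn) (fun _ _ => by positivity) m

theorem tendsto_harmonicSup : Tendsto (harmonicSup u) atTop (𝓝 0) := by
  refine tendsto_order.2
    ⟨fun a ha => .of_forall fun m => ha.trans_le (harmonicSup_mem_Icc u m).1, fun δ hδ => ?_⟩
  obtain ⟨N, hN⟩ := exists_nat_one_div_lt hδ
  have hu : ∀ᶠ m in atTop, ∀ n < N, u n ≤ m :=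
    (finite_Iio N).eventually_all.2 fun n _ => eventually_ge_atTop (u n)
  filter_upwards [hu] with m hm using (harmonicSup_le_one_div hm).trans_lt hN

end HarmonicSup

section IdealConvergence

variable {φ : Set ℕ → ℝ≥0∞}

theorem IsLSCSubmeasure.monotone (hφ : IsLSCSubmeasure φ) : Monotone φ := fun A B h => by
  simpa only [union_eq_self_of_subset_left h] using hφ.2.1 A B

theorem exists_lt_apply_Ico
    (hlsc : ∀ A : Set ℕ, Tendsto (fun n => φ (A ∩ Iio n)) atTop (𝓝 (φ A)))
    {c : ℝ≥0∞} (hc : c < ⨅ n : ℕ, φ (Iio n)ᶜ) (k : ℕ) : ∃ l, c < φ (Ico k l) := by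
  obtain ⟨l, hl⟩ := ((hlsc (Iio k)ᶜ).eventually_const_lt (hc.trans_le (iInf_le _ k))).exists
  exact ⟨l, by rwa [compl_Iio, Ici_inter_Iio] at hl⟩

theorem exhPointwise_of_tendsto_zero (hempty : φ ∅ = 0) {f : ℕ → ℝ → ℝ} {A : Set ℝ}
    (hf : ∀ x ∈ A, Tendsto (fun m => f m x) atTop (𝓝 0)) : ExhPointwise φ f A := by
  intro δ hδ x hx
  obtain ⟨k, hk⟩ := eventually_atTop.1 ((hf x hx).eventually_lt_const hδ)
  have hsub : {m | δ ≤ f m x} ⊆ Iio k := fun m hm => not_le.1 fun hkm => (hk m hkm).not_ge hm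
  refine ⟨k, ?_⟩
  rw [sdiff_eq_empty.2 hsub, hempty]
  exact ENNReal.ofReal_pos.2 hδ

theorem bddNatFun_image_of_exhEqui_harmonicSup (hmono : Monotone φ) {c : ℝ} (hc : 0 < c)
    {L : ℕ → ℕ} (hL : ∀ k, ENNReal.ofReal c < φ (Ico k (L k))) {g : ℝ → ℕ → ℕ} {A : Set ℝ}
    (hA : ExhEqui φ (fun m x => harmonicSup (L ∘ g x) m) A) : BddNatFun (g '' A) := by
  have hδ (n : ℕ) : 0 < min c (1 / ((n : ℝ) + 1)) := lt_min hc (by positivity)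
  choose k hk using fun n => hA _ (hδ n)
  refine ⟨k, forall_mem_image.2 fun x hx n => ?_⟩
  by_contra! hlt
  have hsub : Ico (g x n) (L (g x n)) ⊆
      {m | min c (1 / ((n : ℝ) + 1)) ≤ harmonicSup (L ∘ g x) m} \ Iio (k n) := fun m hm =>
    ⟨(min_le_right _ _).trans (one_div_le_harmonicSup (u := L ∘ g x) hm.2),
      (hlt.le.trans hm.1).not_gt⟩
  refine (hk n x hx).not_ge ?_
  calc ENNReal.ofReal (min c (1 / ((n : ℝ) + 1)))
      ≤ ENNReal.ofReal c := ENNReal.ofReal_le_ofReal (min_le_left _ _)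
    _ ≤ φ (Ico (g x n) (L (g x n))) := (hL _).le
    _ ≤ _ := hmono hsub

theorem exists_exhPointwise_and_bddNatFun_image_of_exhEqui (hempty : φ ∅ = 0)
    (hmono : Monotone φ)
    (hlsc : ∀ A : Set ℕ, Tendsto (fun n => φ (A ∩ Iio n)) atTop (𝓝 (φ A)))
    (hproper : 0 < ⨅ n : ℕ, φ (Iio n)ᶜ) (g : ℝ → ℕ → ℕ) :
    ∃ f : ℕ → ℝ → ℝ, (∀ m x, f m x ∈ Icc (0 : ℝ) 1) ∧ ExhPointwise φ f univ ∧
      ∀ A : Set ℝ, ExhEqui φ f A → BddNatFun (g '' A) := by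
  obtain ⟨c, -, hc0, hc⟩ := ENNReal.lt_iff_exists_real_btwn.1 hproper
  choose L hL using exists_lt_apply_Ico hlsc hc
  exact ⟨fun m x => harmonicSup (L ∘ g x) m, fun m x => harmonicSup_mem_Icc _ m,
    exhPointwise_of_tendsto_zero hempty fun _ _ => tendsto_harmonicSup,
    fun _ => bddNatFun_image_of_exhEqui_harmonicSup hmono (ENNReal.ofReal_pos.1 hc0) hL⟩

end IdealConvergence

theorem stmt_10_general {μ : Measure ℝ} {κ : Cardinal} (hμ : ∀ s : Set ℝ, #s < κ → μ s = 0)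
    {Z : Set (ℕ → ℕ)} (hZ : 𝔠 ≤ #Z) (hZκ : ∀ M ⊆ Z, BddNatFun M → #M < κ)
    {φ : Set ℕ → ℝ≥0∞} (hempty : φ ∅ = 0) (hmono : Monotone φ)
    (hlsc : ∀ A : Set ℕ, Tendsto (fun n => φ (A ∩ Iio n)) atTop (𝓝 (φ A)))
    (hproper : 0 < ⨅ n : ℕ, φ (Iio n)ᶜ) :
    ∃ f : ℕ → ℝ → ℝ, (∀ m x, f m x ∈ Icc (0 : ℝ) 1) ∧ ExhPointwise φ f univ ∧
      ∀ A : Set ℝ, μ A ≠ 0 → ¬ ExhEqui φ f A := by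
  obtain ⟨g, hg⟩ :=
    exists_forall_bddNatFun_image_imp_measure_eq_zero hμ (Cardinal.mk_real.trans_le hZ) hZκ
  obtain ⟨f, hf01, hpt, hequi⟩ :=
    exists_exhPointwise_and_bddNatFun_image_of_exhEqui hempty hmono hlsc hproper g
  exact ⟨f, hf01, hpt, fun A hA hfA => hA (hg A (hequi A hfA))⟩

theorem stmt_10
    (hnon : ∀ s : Set ℝ, Cardinal.mk s < Cardinal.continuum → volume s = 0)
    (hLusin : ∃ Z : Set (ℕ → ℕ), Cardinal.mk Z = Cardinal.continuum ∧
      ∀ M ⊆ Z, IsMeagre M → Cardinal.mk M < Cardinal.continuum)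
    (φ : Set ℕ → ℝ≥0∞) (hφ : IsLSCSubmeasure φ)
    (hproper : 0 < ⨅ n : ℕ, φ (Set.Iio n)ᶜ) :
    ∃ f : ℕ → ℝ → ℝ,
      (∀ m : ℕ, ∀ x ∈ Set.Icc (0 : ℝ) 1, f m x ∈ Set.Icc (0 : ℝ) 1) ∧
      ExhPointwise φ f (Set.Icc 0 1) ∧
      ∃ ε : ℝ, 0 < ε ∧
        ∀ A ⊆ Set.Icc (0 : ℝ) 1, ENNReal.ofReal (1 - ε) ≤ volume A →
          ¬ ExhEqui φ f A := by
  obtain ⟨Z, hZ, hZM⟩ := hLusin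
  obtain ⟨f, hf01, hpt, hequi⟩ := stmt_10_general hnon hZ.ge
    (fun M hM hbdd => hZM M hM hbdd.isMeagre) hφ.1 hφ.monotone hφ.2.2.2 hproper
  refine ⟨f, fun m x _ => hf01 m x, fun δ hδ x _ => hpt δ hδ x (mem_univ x), 1 / 2, by norm_num,
    fun A _ hA => hequi A (lt_of_lt_of_le ?_ hA).ne'⟩
  exact ENNReal.ofReal_pos.2 (by norm_num)
end
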